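/- In the Gaussian linear model, the median formulation of the shareholder problem coincides with the linear problem: if qY + θᵀ(S_1 − S_0(1+r+λ)) + (C_0+P)(1+r+λ) is a Gaussian random variable for each θ, and there exists θ̄ ∈ Θ(q) such that its mean q m_Y + θ̄ᵀ(m_1 − S_0(1+r+λ)) + (C_0+P)(1+r+λ) > 0, then sup_{θ∈Θ(q)} M[(X(θ,q))^+] = sup_{θ∈Θ(q)} E[X(θ,q)], where M denotes the median. -/

import Mathlib

open MeasureTheory ProbabilityTheory Matrix

/-- Median of a real random variable `X`: `inf {m | P[X ≤ m] ≥ 1/2}`. -/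
noncomputable def median {Ω : Type*} [MeasurableSpace Ω] (μ : Measure Ω) (X : Ω → ℝ) : ℝ :=
  sInf {m : ℝ | (1 : ENNReal) / 2 ≤ μ {ω | X ω ≤ m}}

lemma gauss_refl (m : ℝ) (v : NNReal) (t : ℝ) :
    gaussianReal m v (Set.Iic t) = gaussianReal m v (Set.Ici (2 * m - t)) := by
  have h : (gaussianReal m v).map (fun x => 2 * m - x) = gaussianReal m v := by
    rw [gaussianReal_map_const_sub]
    congr 1
    ring
  conv_lhs => rw [← h]
  rw [Measure.map_apply (by fun_prop) measurableSet_Iic]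
  congr 1
  ext x
  simp only [Set.mem_preimage, Set.mem_Iic, Set.mem_Ici]
  constructor <;> intro h <;> linarith

lemma gauss_half_iff (m : ℝ) (v : NNReal) (t : ℝ) :
    (1 : ENNReal) / 2 ≤ gaussianReal m v (Set.Iic t) ↔ m ≤ t := by
  constructor
  · intro h
    by_contra! hlt
    by_cases hv : v = 0
    · subst hv
      rw [gaussianReal_zero_var, Measure.dirac_apply' _ measurableSet_Iic] at h
      simp [Set.indicator, not_le.mpr hlt] at h
    have hpos : gaussianReal m v (Set.Ioo t (2 * m - t)) ≠ 0 := by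
      intro h0
      have h1 := gaussianReal_absolutelyContinuous' m hv h0
      rw [Real.volume_Ioo, ENNReal.ofReal_eq_zero] at h1
      linarith
    have hc : gaussianReal m v (Set.Iic t) + gaussianReal m v (Set.Ioi t) = 1 := by
      rw [← Set.compl_Iic]
      exact prob_add_prob_compl measurableSet_Iic
    have hd : gaussianReal m v (Set.Ioi t) =
        gaussianReal m v (Set.Ioo t (2 * m - t)) + gaussianReal m v (Set.Ici (2 * m - t)) := by
      rw [← measure_union _ measurableSet_Ici, Set.Ioo_union_Ici_eq_Ioi (by linarith)]
      rw [Set.disjoint_left]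
      intro x hx hx'
      exact absurd hx.2 (not_lt.mpr hx')
    rw [hd, ← gauss_refl] at hc
    have h2 : (1 : ENNReal) + gaussianReal m v (Set.Ioo t (2 * m - t)) ≤ 1 := by
      calc (1 : ENNReal) + gaussianReal m v (Set.Ioo t (2 * m - t))
          = 1 / 2 + (gaussianReal m v (Set.Ioo t (2 * m - t)) + 1 / 2) := by
            rw [add_comm _ ((1 : ENNReal) / 2), ← add_assoc, ENNReal.add_halves]
        _ ≤ _ := by gcongr
        _ = 1 := hc
    exact absurd h2 (not_le.mpr (ENNReal.lt_add_right ENNReal.one_ne_top hpos))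
  · intro h
    refine le_trans ?_ (measure_mono (Set.Iic_subset_Iic.mpr h))
    by_contra! hlt
    have h1 := gauss_refl m v m
    rw [show 2 * m - m = m by ring] at h1
    have h2 : (1 : ENNReal) ≤ gaussianReal m v (Set.Iic m) + gaussianReal m v (Set.Ici m) := by
      rw [← measure_univ (μ := gaussianReal m v), ← Set.Iic_union_Ici (a := m)]
      exact measure_union_le _ _
    rw [← h1] at h2
    have h3 := ENNReal.add_lt_add hlt hlt
    rw [ENNReal.add_halves] at h3
    exact absurd h2 (not_le.mpr h3)

lemma median_pos_part {Ω : Type*} [MeasurableSpace Ω] (μ : Measure Ω)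
    (X : Ω → ℝ) (hX : Measurable X) (m : ℝ) (v : NNReal)
    (h : μ.map X = gaussianReal m v) : median μ (fun ω => max (X ω) 0) = max m 0 := by
  have : {t : ℝ | (1 : ENNReal) / 2 ≤ μ {ω | max (X ω) 0 ≤ t}} = Set.Ici (max m 0) := by
    ext t
    simp only [Set.mem_setOf_eq, Set.mem_Ici, max_le_iff]
    by_cases ht : 0 ≤ t
    · rw [← gauss_half_iff m v t, ← h, Measure.map_apply hX measurableSet_Iic]
      simp [ht, Set.preimage]
    · simp [ht]
  rw [median, this, csInf_Ici]

/-- In the Gaussian linear model, the median formulation of the shareholder problem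
coincides with the linear (whole-bank) problem: if each `X(θ,q)` is Gaussian and some
admissible `θ̄` has positive mean, then
`sup_{θ∈Θ(q)} M[(X(θ,q))⁺] = sup_{θ∈Θ(q)} E[X(θ,q)]`. -/
theorem median_problem_eq_linear_problem
    {Ω : Type*} [MeasurableSpace Ω] (μ : Measure Ω) [IsProbabilityMeasure μ]
    {d : ℕ} (S1 : Ω → Fin d → ℝ) (Y : Ω → ℝ)
    (hS1 : Measurable S1) (hY : Measurable Y)
    (A : Matrix (Fin d) (Fin d) ℝ) (b : Fin d → ℝ)
    (S0 m1 : Fin d → ℝ) (mY σY ν C0 P r lam q : ℝ)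
    (X : (Fin d → ℝ) → Ω → ℝ)
    (hX : ∀ θ ω, X θ ω =
      q * Y ω + θ ⬝ᵥ (S1 ω - (1 + r + lam) • S0) + (C0 + P) * (1 + r + lam))
    (EX : (Fin d → ℝ) → ℝ)
    (hEX : ∀ θ, EX θ =
      q * mY + θ ⬝ᵥ (m1 - (1 + r + lam) • S0) + (C0 + P) * (1 + r + lam))
    (vθ : (Fin d → ℝ) → NNReal)
    (hgauss : ∀ θ, μ.map (X θ) = gaussianReal (EX θ) (vθ θ))
    (Θ : Set (Fin d → ℝ))
    (hΘ : Θ = {θ | C0 = ν * Real.sqrt (θ ⬝ᵥ A *ᵥ θ + 2 * q * (θ ⬝ᵥ b) + σY ^ 2 * q ^ 2)})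
    (hΘcompact : IsCompact Θ)
    (hbar : ∃ θbar ∈ Θ, 0 < EX θbar) :
    sSup ((fun θ => median μ (fun ω => max (X θ ω) 0)) '' Θ) =
      sSup ((fun θ => EX θ) '' Θ) := by
  have hmeas : ∀ θ, Measurable (X θ) := by
    intro θ
    rw [show X θ = _ from funext (hX θ)]
    simp only [dotProduct, Pi.sub_apply]
    fun_prop
  simp only [fun θ => median_pos_part μ (X θ) (hmeas θ) _ _ (hgauss θ)]
  have hcont : Continuous EX := by
    rw [show EX = _ from funext hEX]
    simp only [dotProduct]
    fun_prop
  have hb : BddAbove ((fun θ => EX θ) '' Θ) := (hΘcompact.image hcont).bddAbove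
  have hb' : BddAbove ((fun θ => max (EX θ) 0) '' Θ) :=
    (hΘcompact.image (hcont.max continuous_const)).bddAbove
  obtain ⟨θ₀, hθ₀, hpos⟩ := hbar
  apply le_antisymm
  · apply csSup_le (Set.Nonempty.image _ ⟨θ₀, hθ₀⟩)
    rintro _ ⟨θ, hθ, rfl⟩
    exact max_le (le_csSup hb ⟨θ, hθ, rfl⟩) (hpos.le.trans (le_csSup hb ⟨θ₀, hθ₀, rfl⟩))
  · apply csSup_le (Set.Nonempty.image _ ⟨θ₀, hθ₀⟩)
    rintro _ ⟨θ, hθ, rfl⟩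
    exact (le_max_left _ _).trans (le_csSup hb' ⟨θ, hθ, rfl⟩)
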